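/- arXiv:1510.05765 — 4 statements merged into one kernel-verified Lean document; each statement's English description precedes it below -/
import Mathlib

section
/- The number of permutations π of {1,2,…,n+k} satisfying −k ≤ π(i) − i ≤ n for every i ∈ {1,…,n+k} equals the poly-Bernoulli number B(n,k) = ∑_{m=0}^{min(n,k)} (m!)² · S(n+1,m+1) · S(k+1,m+1). -/
/-!
Split the rows of the permutation matrix of `π` into the first `k` and the last `n`, and its columns
into the first `n` and the last `k`. The condition `-k ≤ π(i) - i ≤ n` does not restrict the
`k × n` and `n × k` diagonal blocks of this decomposition, while on the `k × k` and `n × n` blocks it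
says (after reversing the indices in the latter) that the entries lie on the staircase board
`{(i, b) : b ≤ i}`.

The number of placements of non-attacking rooks on the staircase of size `k` that leave `m` rows
free is `stirling (k + 1) (m + 1)`: the last row is either empty, or holds a rook in one of the
columns left free by the previous rows, which is the Stirling recurrence (`card_placement`).
Given a placement on each of the two staircases, with `m₁` and `m₂` free rows, the rest of `π`
consists of an injection of `m₁` free rows into `m₂` free columns and one of `m₂` free rows into `m₁`
free columns (`card_fiber`); this is possible only if `m₁ = m₂ = m`, and then in `(m!)²` ways
(`card_fiber_staircase`). Summing over the placements gives the formula (`card_block_board`).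
-/

/-- Stirling numbers of the second kind: `stirling a b` is the number of
partitions of an `a`-element set into `b` nonempty blocks. -/
def stirling : ℕ → ℕ → ℕ
  | 0, 0 => 1
  | 0, _ + 1 => 0
  | _ + 1, 0 => 0
  | n + 1, b + 1 => (b + 1) * stirling n (b + 1) + stirling n b

/-- The poly-Bernoulli number `B(n,k) = ∑_{m=0}^{min(n,k)} (m!)² S(n+1,m+1) S(k+1,m+1)`. -/
def polyBernoulli (n k : ℕ) : ℕ :=
  ∑ m ∈ Finset.range (min n k + 1),
    (Nat.factorial m) ^ 2 * stirling (n + 1) (m + 1) * stirling (k + 1) (m + 1)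

/-- A partial function `Fin k → Option (Fin K)`, read as a set of rooks with at most one rook in each
row, is a rook placement on the staircase board `{(i, b) : b ≤ i}` when no two rooks share a column
and every rook stands on the board. The number of columns `K` is kept fixed so that rows can be
added one at a time. -/
def IsStaircase {k K : ℕ} (g : Fin k → Option (Fin K)) : Prop :=
  (∀ i b, g i = some b → (b : ℕ) ≤ i) ∧ ∀ i j b, g i = some b → g j = some b → i = j

/-- The number of rows of `g` that contain no rook. -/
noncomputable def freeRows {A B : Type*} [Fintype A] (g : A → Option B) : ℕ :=
  Nat.card {a // g a = none}

/-- Among the first `l ≥ k` columns, which contain all rooks of a placement on the first `k` rows,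
there are `l - k` more free columns than there are free rows. -/
lemma card_free_columns {k K : ℕ} {g : Fin k → Option (Fin K)}
    (hg : IsStaircase g) (l : ℕ) (hl : l ≤ K) (hkl : k ≤ l) :
    Nat.card {b : Fin K // (b : ℕ) < l ∧ ∀ i, g i ≠ some b} + k = l + freeRows g := by
  classical
  -- The occupied rows and the occupied columns correspond to each other.
  have e : Nat.card {i // g i ≠ none} = Nat.card {b : Fin K // (b : ℕ) < l ∧ ∃ i, g i = some b} := by
    apply Nat.card_congr
    refine Equiv.ofBijective (fun i => ⟨(g i.1).get (Option.isSome_iff_ne_none.2 i.2), ?_, i.1, by simp⟩)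
      ⟨?_, ?_⟩
    · have := hg.1 i.1 ((g i.1).get (Option.isSome_iff_ne_none.2 i.2)) (by simp)
      omega
    · rintro ⟨i, hi⟩ ⟨j, hj⟩ h
      simp only [Subtype.mk.injEq] at h ⊢
      exact hg.2 i j ((g i).get (Option.isSome_iff_ne_none.2 hi)) (by simp) (by rw [h]; simp)
    · rintro ⟨b, hb, i, hi⟩
      exact ⟨⟨i, by simp [hi]⟩, by simp [hi]⟩
  have h1 : Nat.card {i // g i = none} + Nat.card {i // g i ≠ none} = k := by
    rw [← Nat.card_sum, Nat.card_congr (Equiv.sumCompl (fun i => g i = none))]; simp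
  have h2 : Nat.card {b : Fin K // (b : ℕ) < l ∧ ∃ i, g i = some b}
      + Nat.card {b : Fin K // (b : ℕ) < l ∧ ∀ i, g i ≠ some b} = l := by
    simp only [Nat.card_eq_fintype_card, Fintype.card_subtype]
    rw [← Finset.card_union_of_disjoint, ← Finset.filter_or]
    · have : (Finset.univ.filter fun b : Fin K => ((b : ℕ) < l ∧ ∃ i, g i = some b) ∨
          ((b : ℕ) < l ∧ ∀ i, g i ≠ some b)) = Finset.univ.filter fun b : Fin K => (b : ℕ) < l := by
        ext b
        simp only [Finset.mem_filter, Finset.mem_univ, true_and]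
        constructor
        · tauto
        · intro h
          by_cases h' : ∃ i, g i = some b
          · exact Or.inl ⟨h, h'⟩
          · exact Or.inr ⟨h, by simpa using h'⟩
      rw [this, Fin.card_filter_val_lt]; omega
    · rw [Finset.disjoint_filter]
      rintro b - ⟨-, i, hi⟩ ⟨-, h⟩
      exact h i hi
  unfold freeRows
  omega

lemma isStaircase_snoc {k K : ℕ} (g : Fin k → Option (Fin K)) (x : Option (Fin K)) :
    IsStaircase (Fin.snoc g x : Fin (k + 1) → Option (Fin K)) ↔
      IsStaircase g ∧ ∀ b, x = some b → (b : ℕ) < k + 1 ∧ ∀ i, g i ≠ some b := by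
  unfold IsStaircase
  simp only [Fin.forall_fin_succ', Fin.snoc_castSucc, Fin.snoc_last, Fin.val_castSucc, Fin.val_last,
    Fin.castSucc_inj]
  constructor
  · rintro ⟨⟨h1, h2⟩, h3, h4⟩
    refine ⟨⟨h1, fun i j b => (h3 i).1 j b⟩, fun b hb => ⟨by have := h2 b hb; omega, fun i hi => ?_⟩⟩
    exact absurd ((h3 i).2 b hi hb) (Fin.castSucc_lt_last i).ne
  · rintro ⟨⟨h1, h2⟩, h3⟩
    refine ⟨⟨h1, fun b hb => by have := (h3 b hb).1; omega⟩,
      fun i => ⟨fun j b => h2 i j b, fun b hi hb => absurd hi ((h3 b hb).2 i)⟩,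
      fun i b hb hi => absurd hi ((h3 b hb).2 i), by simp⟩

lemma freeRows_snoc {k K : ℕ} (g : Fin k → Option (Fin K)) (x : Option (Fin K)) :
    freeRows (Fin.snoc g x : Fin (k + 1) → Option (Fin K)) =
      freeRows g + if x = none then 1 else 0 := by
  classical
  simp only [freeRows, Nat.card_eq_fintype_card, Fintype.card_subtype, Finset.card_filter,
    Fin.sum_univ_castSucc, Fin.snoc_castSucc, Fin.snoc_last]

/-- The placements of rooks on the first `k` rows of the staircase that leave `m` rows free. -/
abbrev Placement (k K m : ℕ) : Type := {g : Fin k → Option (Fin K) // IsStaircase g ∧ freeRows g = m}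

/-- Splitting off the last row: it is either empty or holds a rook in a free column. -/
lemma card_placement_succ (k K m : ℕ) (hk : k + 1 ≤ K) :
    Nat.card (Placement (k + 1) K m) =
      (m + 1) * Nat.card (Placement k K m) +
        Nat.card {g : Fin k → Option (Fin K) // IsStaircase g ∧ freeRows g + 1 = m} := by
  classical
  let e : Placement (k + 1) K m ≃
      (Σ g : Placement k K m, {b : Fin K // (b : ℕ) < k + 1 ∧ ∀ i, g.1 i ≠ some b}) ⊕
        {g : Fin k → Option (Fin K) // IsStaircase g ∧ freeRows g + 1 = m} := by
    symm
    refine Equiv.ofBijective (Sum.elim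
      (fun p => ⟨Fin.snoc (α := fun _ => Option (Fin K)) p.1.1 (some p.2.1), ?_, ?_⟩)
      (fun p => ⟨Fin.snoc (α := fun _ => Option (Fin K)) p.1 none, ?_, ?_⟩)) ⟨?_, ?_⟩
    · rw [isStaircase_snoc]
      refine ⟨p.1.2.1, fun b hb => ?_⟩
      cases hb
      exact p.2.2
    · rw [freeRows_snoc]; simpa using p.1.2.2
    · rw [isStaircase_snoc]
      exact ⟨p.2.1, by simp⟩
    · rw [freeRows_snoc]; simpa using p.2.2
    · rintro (⟨⟨g, hg⟩, ⟨b, hb⟩⟩ | ⟨g, hg⟩) (⟨⟨g', hg'⟩, ⟨b', hb'⟩⟩ | ⟨g', hg'⟩) h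
      all_goals
        have h := Fin.snoc_injective2 (α := fun _ => Option (Fin K)) (congrArg Subtype.val h)
        simp only [Option.some.injEq, reduceCtorEq, and_false, and_true] at h
      · obtain ⟨rfl, rfl⟩ := h
        rfl
      · subst h
        rfl
    · rintro ⟨g, hg⟩
      induction g using Fin.snocCases with
      | snoc g x =>
        rw [isStaircase_snoc, freeRows_snoc] at hg
        rcases x with _ | b
        · exact ⟨Sum.inr ⟨g, hg.1.1, by simpa using hg.2⟩, rfl⟩
        · exact ⟨Sum.inl ⟨⟨g, hg.1.1, by simpa using hg.2⟩, b, hg.1.2 b rfl⟩, rfl⟩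
  rw [Nat.card_congr e, Nat.card_sum, Nat.card_sigma]
  congr 1
  rw [Finset.sum_congr rfl (g := fun _ => m + 1), Finset.sum_const, smul_eq_mul, mul_comm,
    Finset.card_univ, Nat.card_eq_fintype_card]
  intro g _
  have := card_free_columns g.2.1 (k + 1) hk (by omega)
  rw [g.2.2] at this
  omega

lemma stirling_succ_zero (a : ℕ) : stirling (a + 1) 0 = 0 := by simp [stirling]

/-- The rook numbers of the staircase board are Stirling numbers of the second kind. -/
lemma card_placement (k K m : ℕ) (hk : k ≤ K) :
    Nat.card (Placement k K m) = stirling (k + 1) (m + 1) := by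
  induction k generalizing m with
  | zero =>
    have h0 : ∀ g : Fin 0 → Option (Fin K), IsStaircase g ∧ freeRows g = 0 := fun g =>
      ⟨⟨fun i => i.elim0, fun i => i.elim0⟩, by simp [freeRows]⟩
    rcases m with _ | m
    · rw [Placement, Nat.card_congr (Equiv.subtypeUnivEquiv h0)]
      simp [stirling]
    · have : IsEmpty (Placement 0 K (m + 1)) := ⟨fun g => by have := (h0 g.1).2; have := g.2.2; omega⟩
      simp [stirling]
  | succ k ih =>
    rw [card_placement_succ k K m hk, ih m (by omega), stirling]
    congr 1
    rcases m with _ | m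
    · simp [stirling_succ_zero]
    · rw [← ih m (by omega)]
      simp [Placement]

/-- An injection `f : A ⊕ C → D ⊕ B` whose rooks in the blocks `A × B` and `C × D` are prescribed by
`g₁` and `g₂` amounts to an injection of the free rows of `A` into the free columns of `D` and one of
the free rows of `C` into the free columns of `B`. -/
lemma card_fiber {A B C D : Type*}
    (g₁ : A → Option B) (g₂ : C → Option D)
    (h₁ : ∀ i j b, g₁ i = some b → g₁ j = some b → i = j)
    (h₂ : ∀ i j b, g₂ i = some b → g₂ j = some b → i = j) :
    Nat.card {f : A ⊕ C ↪ D ⊕ B // (∀ a, (f (.inl a)).getRight? = g₁ a) ∧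
        ∀ c, (f (.inr c)).getLeft? = g₂ c} =
      Nat.card ({a // g₁ a = none} ↪ {d // ∀ c, g₂ c ≠ some d}) *
        Nat.card ({c // g₂ c = none} ↪ {b // ∀ a, g₁ a ≠ some b}) := by
  rw [← Nat.card_prod]
  symm
  apply Nat.card_congr
  let F : ({a // g₁ a = none} ↪ {d // ∀ c, g₂ c ≠ some d}) ×
      ({c // g₂ c = none} ↪ {b // ∀ a, g₁ a ≠ some b}) → A ⊕ C → D ⊕ B := fun e =>
    Sum.elim
      (fun a => if h : g₁ a = none then .inl (e.1 ⟨a, h⟩).1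
        else .inr ((g₁ a).get (Option.isSome_iff_ne_none.2 h)))
      (fun c => if h : g₂ c = none then .inr (e.2 ⟨c, h⟩).1
        else .inl ((g₂ c).get (Option.isSome_iff_ne_none.2 h)))
  have F1 : ∀ e a (h : g₁ a = none), F e (.inl a) = .inl (e.1 ⟨a, h⟩).1 := by
    intro e a h; simp [F, h]
  have F2 : ∀ e a b, g₁ a = some b → F e (.inl a) = .inr b := by
    intro e a b h; simp [F, h]
  have F3 : ∀ e c (h : g₂ c = none), F e (.inr c) = .inr (e.2 ⟨c, h⟩).1 := by
    intro e a h; simp [F, h]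
  have F4 : ∀ e c d, g₂ c = some d → F e (.inr c) = .inl d := by
    intro e a b h; simp [F, h]
  clear_value F
  have Finj : ∀ e, Function.Injective (F e) := by
    rintro e (a | c) (a' | c') h
    · rcases h1 : g₁ a with _ | b <;> rcases h2 : g₁ a' with _ | b'
      · rw [F1 e a h1, F1 e a' h2] at h
        have := e.1.injective (Subtype.ext (Sum.inl_injective h))
        rw [Subtype.mk.inj this]
      · rw [F1 e a h1, F2 e a' b' h2] at h; cases h
      · rw [F2 e a b h1, F1 e a' h2] at h; cases h
      · rw [F2 e a b h1, F2 e a' b' h2] at h; cases h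
        rw [h₁ _ _ _ h1 h2]
    · rcases h1 : g₁ a with _ | b <;> rcases h2 : g₂ c' with _ | d
      · rw [F1 e a h1, F3 e c' h2] at h; cases h
      · rw [F1 e a h1, F4 e c' d h2] at h
        exact absurd (h2.trans (congrArg some (Sum.inl_injective h).symm)) ((e.1 ⟨a, h1⟩).2 c')
      · rw [F2 e a b h1, F3 e c' h2] at h
        exact absurd (h1.trans (congrArg some (Sum.inr_injective h))) ((e.2 ⟨c', h2⟩).2 a)
      · rw [F2 e a b h1, F4 e c' d h2] at h; cases h
    · rcases h1 : g₁ a' with _ | b <;> rcases h2 : g₂ c with _ | d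
      · rw [F1 e a' h1, F3 e c h2] at h; cases h
      · rw [F1 e a' h1, F4 e c d h2] at h
        exact absurd (h2.trans (congrArg some (Sum.inl_injective h))) ((e.1 ⟨a', h1⟩).2 c)
      · rw [F2 e a' b h1, F3 e c h2] at h
        exact absurd (h1.trans (congrArg some (Sum.inr_injective h).symm)) ((e.2 ⟨c, h2⟩).2 a')
      · rw [F2 e a' b h1, F4 e c d h2] at h; cases h
    · rcases h1 : g₂ c with _ | b <;> rcases h2 : g₂ c' with _ | b'
      · rw [F3 e c h1, F3 e c' h2] at h
        have := e.2.injective (Subtype.ext (Sum.inr_injective h))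
        rw [Subtype.mk.inj this]
      · rw [F3 e c h1, F4 e c' b' h2] at h; cases h
      · rw [F4 e c b h1, F3 e c' h2] at h; cases h
      · rw [F4 e c b h1, F4 e c' b' h2] at h; cases h
        rw [h₂ _ _ _ h1 h2]
  refine Equiv.ofBijective (fun e => ⟨⟨F e, Finj e⟩, ?_, ?_⟩) ⟨?_, ?_⟩
  · intro a
    rcases h1 : g₁ a with _ | b
    · simp [F1 e a h1]
    · simp [F2 e a b h1]
  · intro a
    rcases h1 : g₂ a with _ | b
    · simp [F3 e a h1]
    · simp [F4 e a b h1]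
  · intro e e' h
    have h : F e = F e' := congrArg (fun x => (x.1 : A ⊕ C → D ⊕ B)) h
    ext ⟨x, hx⟩
    · have := congrFun h (.inl x)
      rw [F1 e x hx, F1 e' x hx] at this
      exact Sum.inl_injective this
    · have := congrFun h (.inr x)
      rw [F3 e x hx, F3 e' x hx] at this
      exact Sum.inr_injective this
  · rintro ⟨f, hf1, hf2⟩
    have k1 : ∀ a : {a // g₁ a = none}, ∃ d : {d // ∀ c, g₂ c ≠ some d}, f (.inl a) = .inl d.1 := by
      rintro ⟨a, ha⟩
      rcases h : f (.inl a) with d | b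
      · refine ⟨⟨d, fun c hc => ?_⟩, rfl⟩
        rw [← hf2 c, Sum.getLeft?_eq_some_iff, ← h] at hc
        simpa using f.injective hc
      · have := hf1 a
        rw [h, ha] at this
        cases this
    have k2 : ∀ a : {a // g₂ a = none}, ∃ d : {d // ∀ c, g₁ c ≠ some d}, f (.inr a) = .inr d.1 := by
      rintro ⟨a, ha⟩
      rcases h : f (.inr a) with d | b
      · have := hf2 a
        rw [h, ha] at this
        cases this
      · refine ⟨⟨b, fun c hc => ?_⟩, rfl⟩
        rw [← hf1 c, Sum.getRight?_eq_some_iff, ← h] at hc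
        simpa using f.injective hc
    choose e1 he1 using k1
    choose e2 he2 using k2
    refine ⟨⟨⟨e1, fun x y h => ?_⟩, ⟨e2, fun x y h => ?_⟩⟩, ?_⟩
    · have : f (.inl x.1) = f (.inl y.1) := by rw [he1, he1, h]
      exact Subtype.ext (Sum.inl_injective (f.injective this))
    · have : f (.inr x.1) = f (.inr y.1) := by rw [he2, he2, h]
      exact Subtype.ext (Sum.inr_injective (f.injective this))
    · apply Subtype.ext
      apply DFunLike.ext
      rintro (a | c)
      · rcases h : g₁ a with _ | b
        · exact (F1 _ a h).trans (he1 ⟨a, h⟩).symm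
        · refine (F2 _ a b h).trans ?_
          rw [← hf1 a, Sum.getRight?_eq_some_iff] at h
          exact h.symm
      · rcases h : g₂ c with _ | b
        · exact (F3 _ c h).trans (he2 ⟨c, h⟩).symm
        · refine (F4 _ c b h).trans ?_
          rw [← hf2 c, Sum.getLeft?_eq_some_iff] at h
          exact h.symm

/-- With square boards, the fibre is empty unless both placements leave the same number `m` of rows
free, and then it has `(m!)²` elements. -/
lemma card_fiber_staircase {k n : ℕ} {g₁ : Fin k → Option (Fin k)} {g₂ : Fin n → Option (Fin n)}
    (h₁ : IsStaircase g₁) (h₂ : IsStaircase g₂) :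
    Nat.card {f : Fin k ⊕ Fin n ↪ Fin n ⊕ Fin k // (∀ a, (f (.inl a)).getRight? = g₁ a) ∧
        ∀ c, (f (.inr c)).getLeft? = g₂ c} =
      if freeRows g₁ = freeRows g₂ then (freeRows g₁).factorial ^ 2 else 0 := by
  classical
  have c : ∀ {k : ℕ} {g : Fin k → Option (Fin k)}, IsStaircase g →
      Nat.card {b : Fin k // ∀ i, g i ≠ some b} = freeRows g := by
    intro k g hg
    have := card_free_columns hg k le_rfl le_rfl
    simp only [Fin.is_lt, true_and] at this
    omega
  have c1 := c h₁
  have c2 := c h₂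
  rw [card_fiber g₁ g₂ h₁.2 h₂.2]
  simp only [Nat.card_eq_fintype_card, Fintype.card_embedding_eq] at c1 c2 ⊢
  rw [c1, c2, ← Nat.card_eq_fintype_card, ← Nat.card_eq_fintype_card]
  change (freeRows g₂).descFactorial (freeRows g₁) * (freeRows g₁).descFactorial (freeRows g₂) = _
  split_ifs with h
  · rw [h, Nat.descFactorial_self, sq]
  · rcases lt_or_gt_of_ne h with h | h
    · rw [Nat.descFactorial_of_lt h, mul_zero]
    · rw [Nat.descFactorial_of_lt h, zero_mul]

lemma freeRows_le {k K : ℕ} (g : Fin k → Option (Fin K)) : freeRows g ≤ k := by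
  have := Finite.card_subtype_le (fun a => g a = none)
  simpa [freeRows] using this

/-- The bijections of the two-by-two block board with staircases in the blocks `A × B` and `C × D`
and no restriction in the other two blocks. -/
lemma card_block_board (n k : ℕ) :
    Nat.card {f : Fin k ⊕ Fin n ↪ Fin n ⊕ Fin k //
        (∀ a b, f (.inl a) = .inr b → (b : ℕ) ≤ a) ∧ ∀ c d, f (.inr c) = .inl d → (d : ℕ) ≤ c} =
      polyBernoulli n k := by
  classical
  let T (k : ℕ) : Finset (Fin k → Option (Fin k)) := Finset.univ.filter IsStaircase
  have hT : ∀ k m, ((T k).filter fun g => freeRows g = m).card = stirling (k + 1) (m + 1) := by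
    intro k m
    rw [← card_placement k k m le_rfl, Finset.filter_filter, Placement, Nat.card_eq_fintype_card,
      Fintype.card_subtype]
  rw [Nat.card_eq_fintype_card, Fintype.card_subtype]
  rw [Finset.card_eq_sum_card_fiberwise (t := T k ×ˢ T n)
    (f := fun f => (fun a => (f (.inl a)).getRight?, fun c => (f (.inr c)).getLeft?))]
  · have step : ∀ p ∈ T k ×ˢ T n, _ = if freeRows p.1 = freeRows p.2 then
        (freeRows p.1).factorial ^ 2 else 0 := fun p hp => by
      simp only [T, Finset.mem_product, Finset.mem_filter, Finset.mem_univ, true_and] at hp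
      exact card_fiber_staircase hp.1 hp.2
    trans ∑ p ∈ T k ×ˢ T n, if freeRows p.1 = freeRows p.2 then (freeRows p.1).factorial ^ 2 else 0
    · refine Finset.sum_congr rfl fun p hp => ?_
      rw [← step p hp, Nat.card_eq_fintype_card, Fintype.card_subtype, Finset.filter_filter]
      congr 1
      ext f
      simp only [T, Finset.mem_product, Finset.mem_filter, Finset.mem_univ, true_and] at hp ⊢
      constructor
      · rintro ⟨-, rfl⟩
        simp
      · rintro ⟨h1, h2⟩
        refine ⟨⟨fun a b hab => ?_, fun c d hcd => ?_⟩, Prod.ext (funext h1) (funext h2)⟩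
        · exact hp.1.1 a b (by rw [← h1, hab]; rfl)
        · exact hp.2.1 c d (by rw [← h2, hcd]; rfl)
    · have key : ∀ p ∈ T k ×ˢ T n,
          (if freeRows p.1 = freeRows p.2 then (freeRows p.1).factorial ^ 2 else 0) =
          ∑ m ∈ Finset.range (min n k + 1),
            if freeRows p.1 = m ∧ freeRows p.2 = m then m.factorial ^ 2 else 0 := by
        intro p _
        split_ifs with h
        · rw [Finset.sum_eq_single (freeRows p.1)]
          · simp [h]
          · intro m _ hm
            rw [if_neg (fun h => hm h.1.symm)]
          · intro hm
            have := freeRows_le p.1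
            have := freeRows_le p.2
            simp only [Finset.mem_range] at hm
            omega
        · refine (Finset.sum_eq_zero fun m _ => if_neg ?_).symm
          rintro ⟨a, b⟩
          exact h (a.trans b.symm)
      rw [Finset.sum_congr rfl key, Finset.sum_comm, polyBernoulli]
      refine Finset.sum_congr rfl fun m _ => ?_
      rw [← Finset.sum_filter, Finset.filter_product (fun g => freeRows g = m)
        (fun g => freeRows g = m), Finset.sum_const, Finset.card_product, hT, hT, smul_eq_mul]
      ring
  · intro f hf
    simp only [Finset.coe_filter, Finset.mem_univ, true_and, Set.mem_ofPred_eq] at hf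
    simp only [T, Finset.coe_product, Finset.coe_filter, Finset.mem_univ, true_and, Set.mem_prod,
      Set.mem_ofPred_eq, IsStaircase, Sum.getRight?_eq_some_iff, Sum.getLeft?_eq_some_iff]
    refine ⟨⟨hf.1, fun i j b hi hj => ?_⟩, hf.2, fun i j b hi hj => ?_⟩
    · simpa using f.injective (hi.trans hj.symm)
    · simpa using f.injective (hi.trans hj.symm)

/-- The number of permutations of an (n+k)-element set with −k ≤ π(i) − i ≤ n for all i
equals the poly-Bernoulli number B(n,k). -/
theorem card_vesztergombi_eq_polyBernoulli (n k : ℕ) :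
    Nat.card {f : Equiv.Perm (Fin (n + k)) //
        ∀ i, -(k : ℤ) ≤ ((f i : ℕ) : ℤ) - ((i : ℕ) : ℤ) ∧ ((f i : ℕ) : ℤ) - ((i : ℕ) : ℤ) ≤ n} =
      polyBernoulli n k := by
  rw [← card_block_board]
  -- Rows: the first `k`, then the last `n` in reverse order.
  let r : Fin k ⊕ Fin n ≃ Fin (n + k) :=
    ((Equiv.refl _).sumCongr Fin.revPerm).trans (finSumFinEquiv.trans (finCongr (Nat.add_comm k n)))
  -- Columns: the first `n` in reverse order, then the last `k`.
  let s : Fin n ⊕ Fin k ≃ Fin (n + k) := (Fin.revPerm.sumCongr (Equiv.refl _)).trans finSumFinEquiv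
  have r1 : ∀ a, ((r (.inl a) : Fin (n + k)) : ℕ) = a := fun a => by simp [r]
  have r2 : ∀ c, ((r (.inr c) : Fin (n + k)) : ℕ) = k + (n - (c + 1)) := fun c => by simp [r, Nat.add_comm]
  have s1 : ∀ d, ((s (.inl d) : Fin (n + k)) : ℕ) = n - (d + 1) := fun a => by simp [s]
  have s2 : ∀ b, ((s (.inr b) : Fin (n + k)) : ℕ) = n + b := fun c => by simp [s]
  clear_value r s
  let e : Equiv.Perm (Fin (n + k)) ≃ (Fin k ⊕ Fin n ↪ Fin n ⊕ Fin k) :=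
    (Equiv.embeddingEquivOfFinite (Fin (n + k))).symm.trans
      (Equiv.embeddingCongr r.symm s.symm)
  have he : ∀ f x, s (e f x) = f (r x) := by
    intro f x
    simp [e, Equiv.embeddingCongr]
  clear_value e
  refine Nat.card_congr (e.subtypeEquiv fun f => ?_)
  rw [r.surjective.forall, Sum.forall]
  simp only [← he]
  refine and_congr (forall_congr' fun a => ?_) (forall_congr' fun c => ?_)
  · rcases h : e f (.inl a) with d | b
    · simp only [r1, s1, reduceCtorEq, false_imp_iff, implies_true, iff_true]
      omega
    · simp only [r1, s2, Sum.inr.injEq, forall_eq']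
      omega
  · rcases h : e f (.inr c) with d | b
    · simp only [r2, s1, Sum.inl.injEq, forall_eq']
      omega
    · simp only [r2, s2, reduceCtorEq, false_imp_iff, implies_true, iff_true]
      omega
end

section
/- For all natural numbers n and k with k ≥ 1, the poly-Bernoulli numbers satisfy the recursion B(n,k) = B(n,k−1) + ∑_{j=1}^{n} C(n,j) · B(n−j+1, k−1), where C(n,j) is the binomial coefficient. -/
/-- The scaled Stirling number `m! · S(n+1, m+1)`; note the order of the arguments `m`, `n`. -/
def scaledStirling (m n : ℕ) : ℕ := m.factorial * stirling (n + 1) (m + 1)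

lemma stirling_succ_succ (n b : ℕ) :
    stirling (n + 1) (b + 1) = (b + 1) * stirling n (b + 1) + stirling n b := by
  rw [stirling]

lemma stirling_eq_zero_of_lt {n k : ℕ} (h : n < k) : stirling n k = 0 := by
  induction n generalizing k with
  | zero =>
    obtain ⟨k, rfl⟩ := Nat.exists_eq_add_of_lt h
    simp [stirling]
  | succ n ih =>
    obtain ⟨k, rfl⟩ : ∃ l, k = l + 1 := ⟨k - 1, by omega⟩
    simp [stirling, ih (show n < k + 1 by omega), ih (show n < k by omega)]

lemma scaledStirling_eq_zero_of_lt {m n : ℕ} (h : n < m) : scaledStirling m n = 0 := by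
  simp [scaledStirling, stirling_eq_zero_of_lt (show n + 1 < m + 1 by omega)]

/-- For `m = 0` the truncated index `m - 1` is harmless because of the factor `m`. -/
lemma scaledStirling_succ (m n : ℕ) :
    scaledStirling m (n + 1) =
      (m + 1) * scaledStirling m n + m * scaledStirling (m - 1) n := by
  cases m with
  | zero => simp [scaledStirling, stirling]
  | succ m =>
    simp only [scaledStirling, Nat.add_sub_cancel]
    rw [stirling_succ_succ (n + 1), Nat.factorial_succ]
    ring

/-- The summation range in `polyBernoulli` may be enlarged freely, the extra terms being zero. -/
lemma polyBernoulli_eq_sum {n k M : ℕ} (h : min n k < M) :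
    polyBernoulli n k = ∑ m ∈ Finset.range M, scaledStirling m n * scaledStirling m k := by
  have hterm : polyBernoulli n k =
      ∑ m ∈ Finset.range (min n k + 1), scaledStirling m n * scaledStirling m k :=
    Finset.sum_congr rfl fun m _ => by simp only [scaledStirling]; ring
  rw [hterm]
  refine Finset.sum_subset (Finset.range_subset_range.2 h) fun m _ hm => ?_
  rw [Finset.mem_range, not_lt] at hm
  rcases lt_or_ge n m with h1 | h1
  · simp [scaledStirling_eq_zero_of_lt h1]
  · simp [scaledStirling_eq_zero_of_lt (show k < m by omega)]

lemma sum_choose_mul_scaledStirling_succ (m n : ℕ) :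
    ∑ i ∈ Finset.range (n + 1), n.choose i * scaledStirling m (i + 1) =
      (m + 1) * ∑ i ∈ Finset.range (n + 1), n.choose i * scaledStirling m i +
        m * ∑ i ∈ Finset.range (n + 1), n.choose i * scaledStirling (m - 1) i := by
  rw [Finset.mul_sum, Finset.mul_sum, ← Finset.sum_add_distrib]
  refine Finset.sum_congr rfl fun i _ => ?_
  rw [scaledStirling_succ]
  ring

lemma sum_choose_mul_scaledStirling (m n : ℕ) :
    ∑ i ∈ Finset.range (n + 1), n.choose i * scaledStirling m i =
      scaledStirling m n + scaledStirling (m + 1) n := by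
  induction n generalizing m with
  | zero => simp [scaledStirling_eq_zero_of_lt (Nat.succ_pos m)]
  | succ n ih =>
    have pascal := Finset.sum_choose_succ_mul (fun i _ => scaledStirling m i) n
    simp only [Nat.cast_id] at pascal
    rw [pascal, sum_choose_mul_scaledStirling_succ, ih, ih, scaledStirling_succ m,
      scaledStirling_succ (m + 1)]
    cases m with
    | zero => simp; ring
    | succ m => simp only [Nat.add_sub_cancel]; ring

lemma sum_Icc_choose_reflect (f : ℕ → ℕ) (n : ℕ) :
    f (n + 1) + ∑ j ∈ Finset.Icc 1 n, n.choose j * f (n - j + 1) =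
      ∑ i ∈ Finset.range (n + 1), n.choose i * f (i + 1) := by
  rw [← Finset.sum_range_reflect, Finset.sum_range_succ', add_comm]
  congr 1
  · rw [Finset.range_eq_Ico, Finset.sum_Ico_add' (fun j => n.choose (n + 1 - 1 - j) *
      f (n + 1 - 1 - j + 1)) 0 n 1]
    refine Finset.sum_congr (by ext; simp only [Finset.mem_Icc, Finset.mem_Ico]; omega) fun j hj => ?_
    have hjn : j ≤ n := by rw [Finset.mem_Ico] at hj; omega
    rw [Nat.add_sub_cancel, Nat.choose_symm hjn]
  · simp

/-- Coefficient form of `(m+1) e²ˣ(eˣ-1)ᵐ = A + (eˣ - 1) · dA/dx`, where `A = eˣ(eˣ-1)ᵐ`. -/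
lemma scaledStirling_key (m n : ℕ) :
    scaledStirling m n + ∑ j ∈ Finset.Icc 1 n, n.choose j * scaledStirling m (n - j + 1) =
      (m + 1) * (scaledStirling m n + scaledStirling (m + 1) n) := by
  have h := sum_Icc_choose_reflect (scaledStirling m) n
  rw [sum_choose_mul_scaledStirling_succ, sum_choose_mul_scaledStirling,
    sum_choose_mul_scaledStirling, scaledStirling_succ] at h
  cases m with
  | zero => simp at h ⊢; linarith
  | succ m => simp only [Nat.add_sub_cancel] at h; linarith

/-- Apply the Stirling recurrence in `k`, then shift the index in the part involving `m - 1`. -/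
lemma sum_shift {n k M : ℕ} (hM : k < M) :
    ∑ m ∈ Finset.range (M + 1), scaledStirling m n * scaledStirling m (k + 1) =
      ∑ m ∈ Finset.range (M + 1),
        (m + 1) * (scaledStirling m n + scaledStirling (m + 1) n) * scaledStirling m k := by
  have h1 : ∑ m ∈ Finset.range (M + 1),
        scaledStirling m n * (m * scaledStirling (m - 1) k) =
      ∑ m ∈ Finset.range (M + 1),
        scaledStirling (m + 1) n * ((m + 1) * scaledStirling m k) := by
    rw [Finset.sum_range_succ', Finset.sum_range_succ _ M, scaledStirling_eq_zero_of_lt hM]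
    simp
  simp only [scaledStirling_succ, mul_add, Finset.sum_add_distrib, h1]
  simp only [← Finset.sum_add_distrib]
  exact Finset.sum_congr rfl fun m _ => by ring

/-- The poly-Bernoulli recursion:
B(n,k) = B(n,k−1) + ∑_{j=1}^{n} C(n,j) · B(n−j+1, k−1) for k ≥ 1. -/
theorem polyBernoulli_recursion (n k : ℕ) (hk : 1 ≤ k) :
    polyBernoulli n k =
      polyBernoulli n (k - 1) +
        ∑ j ∈ Finset.Icc 1 n, n.choose j * polyBernoulli (n - j + 1) (k - 1) := by
  obtain ⟨k, rfl⟩ := Nat.exists_eq_add_of_le' hk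
  rw [Nat.add_sub_cancel]
  -- `k + 2` terms suffice for every poly-Bernoulli number that occurs.
  have hB : ∀ l, polyBernoulli l k =
      ∑ m ∈ Finset.range (k + 1 + 1), scaledStirling m l * scaledStirling m k :=
    fun l => polyBernoulli_eq_sum (by omega)
  rw [polyBernoulli_eq_sum (show min n (k + 1) < k + 1 + 1 by omega), sum_shift (by omega)]
  simp only [hB, Finset.mul_sum]
  rw [Finset.sum_comm, ← Finset.sum_add_distrib]
  refine Finset.sum_congr rfl fun m _ => ?_
  rw [← scaledStirling_key, add_mul, Finset.sum_mul]
  simp only [mul_assoc]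
end

section
/- For every natural number N ≥ 1, the alternating sum ∑_{n=0}^{N} (−1)^n · B(n, N−n) equals 0 (as an integer). -/
open PowerSeries

lemma stirling_eq_zero_of_lt_s12 : ∀ {n b : ℕ}, n < b → stirling n b = 0
  | 0, _ + 1, _ => by simp [stirling]
  | n + 1, b + 1, h => by
    rw [stirling, stirling_eq_zero_of_lt_s12 (n := n) (b := b + 1) (by omega),
      stirling_eq_zero_of_lt_s12 (n := n) (b := b) (by omega), mul_zero]

/-- The ordinary generating function `∑ₙ S(n+1, m+1) Xⁿ`. -/
noncomputable def stirlingSeries (m : ℕ) : PowerSeries ℤ :=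
  PowerSeries.mk fun n => (stirling (n + 1) (m + 1) : ℤ)

lemma stirlingSeries_zero : (1 - X) * stirlingSeries 0 = 1 := by
  ext n
  cases n with
  | zero => simp [stirlingSeries, sub_mul, stirling]
  | succ n =>
    simp [stirlingSeries, sub_mul, coeff_succ_X_mul, coeff_one, stirling]

lemma stirlingSeries_succ (m : ℕ) :
    (1 - ((m : PowerSeries ℤ) + 2) * X) * stirlingSeries (m + 1) = X * stirlingSeries m := by
  have h : stirlingSeries (m + 1) =
      X * (C ((m + 2 : ℕ) : ℤ) * stirlingSeries (m + 1) + stirlingSeries m) := by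
    ext n
    cases n with
    | zero => simp [stirlingSeries, stirling]
    | succ n =>
      rw [coeff_succ_X_mul]
      simp only [stirlingSeries, coeff_mk, map_add, coeff_C_mul]
      rw [stirling]
      push_cast
      ring
  simp only [Nat.cast_add, Nat.cast_ofNat, map_add, map_natCast, map_ofNat] at h
  linear_combination h

/-- The product `F m (-X) * F m (X)`, where `F m` is `stirlingSeries m`. -/
noncomputable def altProd (m : ℕ) : PowerSeries ℤ :=
  rescale (-1) (stirlingSeries m) * stirlingSeries m

lemma rescale_neg_one_X_int : rescale (-1 : ℤ) (X : PowerSeries ℤ) = -X := by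
  simp [rescale_X]

lemma altProd_zero : (1 - X ^ 2) * altProd 0 = 1 := by
  have h := stirlingSeries_zero
  have h' := congrArg (rescale (-1 : ℤ)) h
  simp only [map_mul, map_sub, map_one, rescale_neg_one_X_int] at h'
  unfold altProd
  linear_combination (1 + X) * rescale (-1) (stirlingSeries 0) * h + h'

lemma altProd_succ (m : ℕ) :
    (1 - ((m : PowerSeries ℤ) + 2) ^ 2 * X ^ 2) * altProd (m + 1) = -X ^ 2 * altProd m := by
  have h := stirlingSeries_succ m
  have h' := congrArg (rescale (-1 : ℤ)) h
  simp only [map_mul, map_sub, map_add, map_one, map_natCast, map_ofNat,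
    rescale_neg_one_X_int] at h'
  unfold altProd
  linear_combination (1 + ((m : PowerSeries ℤ) + 2) * X) *
    rescale (-1) (stirlingSeries (m + 1)) * h + X * stirlingSeries m * h'

/-- The telescoped sum: the term with index `m` is `P m - P (m + 1)`, where
`P m = (m!)² (1 - (m+1)²X²) T m` and `T m` is `altProd m`. -/
lemma sum_altProd (M : ℕ) :
    ∑ m ∈ Finset.range M, (m.factorial : PowerSeries ℤ) ^ 2 * altProd m =
      1 - (M.factorial : PowerSeries ℤ) ^ 2 *
        ((1 - ((M : PowerSeries ℤ) + 1) ^ 2 * X ^ 2) * altProd M) := by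
  induction M with
  | zero =>
    have h := altProd_zero
    simp only [Finset.range_zero, Finset.sum_empty, Nat.factorial_zero, Nat.cast_one,
      Nat.cast_zero]
    linear_combination h
  | succ M ih =>
    rw [Finset.sum_range_succ, ih, Nat.factorial_succ]
    push_cast
    linear_combination (((M : PowerSeries ℤ) + 1) * (M.factorial : PowerSeries ℤ)) ^ 2 *
      altProd_succ M

lemma X_pow_dvd_altProd (m : ℕ) : (X : PowerSeries ℤ) ^ m ∣ altProd m := by
  refine Dvd.dvd.mul_left (X_pow_dvd_iff.2 fun n hn => ?_) _
  simp [stirlingSeries, stirling_eq_zero_of_lt_s12 (show n + 1 < m + 1 by omega)]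

lemma coeff_altProd (N m : ℕ) : coeff N (altProd m) = ∑ n ∈ Finset.range (N + 1),
    (-1 : ℤ) ^ n * ((stirling (n + 1) (m + 1) : ℤ) * stirling (N - n + 1) (m + 1)) := by
  rw [altProd, coeff_mul, Finset.Nat.sum_antidiagonal_eq_sum_range_succ_mk]
  simp [stirlingSeries, coeff_rescale, mul_assoc]

/-- The upper summation limit `min n k` may be replaced by any larger one, as the additional
Stirling numbers vanish. -/
lemma polyBernoulli_eq (n k N : ℕ) (h : min n k ≤ N) :
    polyBernoulli n k = ∑ m ∈ Finset.range (N + 1),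
      (Nat.factorial m) ^ 2 * stirling (n + 1) (m + 1) * stirling (k + 1) (m + 1) := by
  refine Finset.sum_subset (Finset.range_mono (by omega)) fun m _ hm => ?_
  rw [Finset.mem_range, not_lt] at hm
  rcases (by omega : n < m ∨ k < m) with h1 | h1
  · rw [stirling_eq_zero_of_lt_s12 (show n + 1 < m + 1 by omega)]; simp
  · rw [stirling_eq_zero_of_lt_s12 (show k + 1 < m + 1 by omega)]; simp

/-- For N ≥ 1, the alternating sum ∑_{n=0}^{N} (−1)^n · B(n, N−n) equals 0. -/
theorem polyBernoulli_alternating_sum (N : ℕ) (hN : 1 ≤ N) :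
    ∑ n ∈ Finset.range (N + 1), (-1 : ℤ) ^ n * (polyBernoulli n (N - n) : ℤ) = 0 := by
  have key := congrArg (coeff N) (sum_altProd (N + 1))
  have hP : coeff N (((N + 1).factorial : PowerSeries ℤ) ^ 2 *
      ((1 - (((N + 1 : ℕ) : PowerSeries ℤ) + 1) ^ 2 * X ^ 2) * altProd (N + 1))) = 0 :=
    X_pow_dvd_iff.1 (((X_pow_dvd_altProd (N + 1)).mul_left _).mul_left _) N (Nat.lt_succ_self N)
  rw [map_sub, hP, coeff_one, if_neg (by omega), sub_zero, map_sum] at key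
  rw [← key]
  have hc (m : ℕ) : coeff N ((m.factorial : PowerSeries ℤ) ^ 2 * altProd m) =
      (m.factorial : ℤ) ^ 2 * coeff N (altProd m) := by
    rw [← coeff_C_mul]
    simp
  simp_rw [hc, coeff_altProd, Finset.mul_sum]
  rw [Finset.sum_comm]
  refine Finset.sum_congr rfl fun n hn => ?_
  rw [polyBernoulli_eq n (N - n) N (by omega)]
  push_cast
  rw [Finset.mul_sum]
  exact Finset.sum_congr rfl fun m _ => by ring
end

section
/- In a lonesum 0-1 matrix, the number of distinct nonzero row sums equals the number of distinct nonzero column sums; that is, if M : Fin n → Fin k → Bool is lonesum, then the cardinality of the set of nonzero values taken by the row sums of M equals the cardinality of the set of nonzero values taken by the column sums of M. -/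
/-!
A lonesum matrix has no `2 × 2` permutation submatrix (`Lonesum.no_switch`), so its rows, viewed
as sets of columns, form a chain, and likewise its columns (`Lonesum.mono`). Send a nonzero row
sum `s` to the number of rows with sum at least `s`. This map is strictly decreasing on row sums,
hence injective, and its values are nonzero column sums (`Lonesum.exists_colSum`). This gives one
inequality (`Lonesum.card_le`); the other is the same inequality for the transpose.
-/

/-- The row sum of row `i`: the number of columns `j` with `M i j = true`. -/
def rowSum {n k : ℕ} (M : Fin n → Fin k → Bool) (i : Fin n) : ℕ :=
  (Finset.univ.filter fun j : Fin k => M i j = true).card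

/-- The column sum of column `j`: the number of rows `i` with `M i j = true`. -/
def colSum {n k : ℕ} (M : Fin n → Fin k → Bool) (j : Fin k) : ℕ :=
  (Finset.univ.filter fun i : Fin n => M i j = true).card

/-- A 0-1 matrix is lonesum iff it is uniquely determined by its row and column sums. -/
def Lonesum {n k : ℕ} (M : Fin n → Fin k → Bool) : Prop :=
  ∀ N : Fin n → Fin k → Bool,
    (∀ i, rowSum N i = rowSum M i) → (∀ j, colSum N j = colSum M j) → N = M

/-- Permuting the entries within each row leaves the row sums unchanged. -/
lemma rowSum_perm {n k : ℕ} (M N : Fin n → Fin k → Bool) (i : Fin n)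
    (e : Equiv.Perm (Fin k)) (h : ∀ j, N i j = M i (e j)) : rowSum N i = rowSum M i := by
  unfold rowSum
  refine Finset.card_equiv e fun j => ?_
  simp [h]

/-- A lonesum matrix contains no `2 × 2` permutation submatrix: interchanging such a submatrix
with its complement would preserve all row and column sums. -/
lemma Lonesum.no_switch {n k : ℕ} {M : Fin n → Fin k → Bool} (h : Lonesum M)
    {a b : Fin n} {c d : Fin k} (hac : M a c = true) (had : M a d = false)
    (hbd : M b d = true) (hbc : M b c = false) : False := by
  -- The switch is at once a swap of columns `c`, `d` in the rows `a`, `b` and a swap of rows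
  -- `a`, `b` in the columns `c`, `d`; the two views give row sums and column sums.
  let N : Fin n → Fin k → Bool := fun i j =>
    if i = a ∨ i = b then M i (Equiv.swap c d j) else M i j
  have hab : a ≠ b := by rintro rfl; simp_all
  have hcd : c ≠ d := by rintro rfl; simp_all
  have hN : ∀ i j, N i j = if j = c ∨ j = d then M (Equiv.swap a b i) j else M i j := by
    intro i j
    simp only [N, Equiv.swap_apply_def]
    grind
  have key : N = M := by
    refine h N (fun i => ?_) (fun j => ?_)
    · by_cases hi : i = a ∨ i = b
      · exact rowSum_perm M N i (Equiv.swap c d) fun j => by simp only [N, if_pos hi]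
      · exact rowSum_perm M N i (Equiv.refl _) fun j => by simp only [N, if_neg hi, Equiv.refl_apply]
    · by_cases hj : j = c ∨ j = d
      · exact rowSum_perm (fun j i => M i j) (fun j i => N i j) j (Equiv.swap a b)
          fun i => by simp only [hN, if_pos hj]
      · exact rowSum_perm (fun j i => M i j) (fun j i => N i j) j (Equiv.refl _)
          fun i => by simp only [hN, if_neg hj, Equiv.refl_apply]
  have h1 := congrFun (congrFun key a) c
  simp [N, hac, had] at h1

lemma Lonesum.transpose {n k : ℕ} {M : Fin n → Fin k → Bool} (h : Lonesum M) :
    Lonesum fun j i => M i j := by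
  intro N hr hc
  have key := h (fun i j => N j i) hc hr
  funext j i
  exact congrFun (congrFun key i) j

/-- Because the rows are nested, a row sum that is at least as large means a larger row. -/
lemma Lonesum.mono {n k : ℕ} {M : Fin n → Fin k → Bool} (h : Lonesum M) {i i' : Fin n}
    (hle : rowSum M i ≤ rowSum M i') {j : Fin k} (hj : M i j = true) : M i' j = true := by
  by_contra hj'
  refine hle.not_gt (Finset.card_lt_card (Finset.ssubset_iff_of_subset ?_ |>.2 ⟨j, ?_, ?_⟩))
  · intro j' hm
    simp only [Finset.mem_filter, Finset.mem_univ, true_and] at hm ⊢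
    by_contra hn
    exact h.no_switch hj (by simpa using hn) hm (by simpa using hj')
  · simpa using hj
  · simpa using hj'

/-- The number of rows with sum at least a nonzero row sum `s` is itself a column sum: it is
attained by a column of least sum among those meeting a row of sum `s`. -/
lemma Lonesum.exists_colSum {n k : ℕ} {M : Fin n → Fin k → Bool} (h : Lonesum M) (i : Fin n)
    (hi : rowSum M i ≠ 0) :
    ∃ j, colSum M j = (Finset.univ.filter fun i' => rowSum M i ≤ rowSum M i').card := by
  have hne : (Finset.univ.filter fun j => M i j = true).Nonempty :=
    Finset.card_pos.1 (Nat.pos_of_ne_zero hi)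
  obtain ⟨j, hj, hmin⟩ := Finset.exists_min_image _ (colSum M) hne
  simp only [Finset.mem_filter, Finset.mem_univ, true_and] at hj hmin
  refine ⟨j, congrArg Finset.card (Finset.filter_congr fun i' _ => ⟨fun hm => ?_, fun hle =>
    h.mono hle hj⟩)⟩
  by_contra hlt
  -- Row `i'` is strictly inside row `i`, so some column `j'` meets row `i` but not row `i'`;
  -- minimality of column `j` then puts column `j` inside column `j'`.
  obtain ⟨j', hj', hn⟩ : ∃ j', M i j' = true ∧ M i' j' ≠ true := by
    by_contra! hall
    exact hlt (Finset.card_le_card fun x hx => by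
      simp only [Finset.mem_filter, Finset.mem_univ, true_and] at hx ⊢
      exact hall x hx)
  exact hn (h.transpose.mono (hmin j' hj') hm)

lemma Lonesum.card_le {n k : ℕ} {M : Fin n → Fin k → Bool} (h : Lonesum M) :
    ((Finset.univ.image (rowSum M)).filter fun s => s ≠ 0).card ≤
      ((Finset.univ.image (colSum M)).filter fun s => s ≠ 0).card := by
  have hanti : ∀ i t, rowSum M i < t →
      (Finset.univ.filter fun i' => t ≤ rowSum M i').card <
        (Finset.univ.filter fun i' => rowSum M i ≤ rowSum M i').card := by
    intro i t hlt
    refine Finset.card_lt_card (Finset.ssubset_iff_of_subset ?_ |>.2 ⟨i, ?_, ?_⟩)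
    · intro x hx
      simp only [Finset.mem_filter, Finset.mem_univ, true_and] at hx ⊢
      omega
    · simp
    · simpa using hlt
  refine Finset.card_le_card_of_injOn
    (fun s => (Finset.univ.filter fun i => s ≤ rowSum M i).card) ?_ ?_
  · intro s hs
    simp only [Finset.coe_filter, Finset.mem_image, Finset.mem_univ, true_and,
      Set.mem_ofPred_eq] at hs ⊢
    obtain ⟨⟨i, rfl⟩, h0⟩ := hs
    exact ⟨h.exists_colSum i h0, Finset.card_ne_zero_of_mem (a := i) (by simp)⟩
  · intro s hs t ht hst
    simp only [Finset.coe_filter, Finset.mem_image, Finset.mem_univ, true_and,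
      Set.mem_ofPred_eq] at hs ht hst
    obtain ⟨⟨i, rfl⟩, -⟩ := hs
    obtain ⟨⟨i', rfl⟩, -⟩ := ht
    rcases lt_trichotomy (rowSum M i) (rowSum M i') with hlt | heq | hlt
    · have := hanti i _ hlt
      omega
    · exact heq
    · have := hanti i' _ hlt
      omega

/-- In a lonesum matrix, the number of distinct nonzero row sums equals the number of
distinct nonzero column sums. -/
theorem lonesum_card_nonzero_rowSums_eq_colSums (n k : ℕ) (M : Fin n → Fin k → Bool)
    (h : Lonesum M) :
    ((Finset.univ.image (rowSum M)).filter fun s => s ≠ 0).card =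
      ((Finset.univ.image (colSum M)).filter fun s => s ≠ 0).card := by
  exact le_antisymm h.card_le h.transpose.card_le
end
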